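/- arXiv:2105.02750 — 4 statements merged into one kernel-verified Lean document; each statement's English description precedes it below -/
import Mathlib

section
/- For every σ ≥ 1, the σ×σ real matrix P with entries P[i,k] = C(σ−i, k−1)/C(σ, k−1) − C(σ−i, k)/C(σ, k) (for 1 ≤ i,k ≤ σ) is invertible; in particular, P[i,k] = 0 whenever k > σ−i+1 and P[i, σ−i+1] = 1/C(σ, σ−i) ≠ 0, so P is anti-triangular with nonzero anti-diagonal. -/
/-- For every `σ ≥ 1`, the `σ×σ` real matrix `P` with entries
`P[i,k] = C(σ−i,k−1)/C(σ,k−1) − C(σ−i,k)/C(σ,k)` (rows and columns indexed by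
`1 ≤ i,k ≤ σ`; here encoded by `Fin σ`, index `i : Fin σ` standing for row
`(i:ℕ)+1`) is invertible; in particular `P[i,k] = 0` whenever `k > σ−i+1`, and
the anti-diagonal entry `P[i, σ−i+1] = 1/C(σ, σ−i)` is nonzero, so `P` is
anti-triangular with nonzero anti-diagonal. -/
theorem firstHit_matrix_invertible {σ : ℕ} (hσ : 1 ≤ σ)
    (P : Matrix (Fin σ) (Fin σ) ℝ)
    (hP : ∀ i k : Fin σ,
      P i k = ((σ - ((i : ℕ) + 1)).choose (k : ℕ) : ℝ) / (σ.choose (k : ℕ) : ℝ)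
        - ((σ - ((i : ℕ) + 1)).choose ((k : ℕ) + 1) : ℝ) / (σ.choose ((k : ℕ) + 1) : ℝ)) :
    IsUnit P ∧
      (∀ i k : Fin σ, σ ≤ (i : ℕ) + (k : ℕ) → P i k = 0) ∧
      (∀ i k : Fin σ, (i : ℕ) + (k : ℕ) + 1 = σ →
        P i k = 1 / (σ.choose (k : ℕ) : ℝ) ∧ (1 : ℝ) / (σ.choose (k : ℕ) : ℝ) ≠ 0) := by
  have h0 : ∀ i k : Fin σ, σ ≤ (i : ℕ) + (k : ℕ) → P i k = 0 := by
    intro i k h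
    have hi := i.2
    rw [hP, Nat.choose_eq_zero_of_lt (show σ - ((i : ℕ) + 1) < k by omega),
      Nat.choose_eq_zero_of_lt (show σ - ((i : ℕ) + 1) < k + 1 by omega)]
    simp
  have h1 : ∀ i k : Fin σ, (i : ℕ) + (k : ℕ) + 1 = σ →
      P i k = 1 / (σ.choose (k : ℕ) : ℝ) ∧ (1 : ℝ) / (σ.choose (k : ℕ) : ℝ) ≠ 0 := by
    intro i k h
    have hk : σ - ((i : ℕ) + 1) = k := by omega
    constructor
    · rw [hP, hk, Nat.choose_self, Nat.choose_eq_zero_of_lt (Nat.lt_succ_self _)]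
      simp
    · have : 0 < σ.choose (k : ℕ) := Nat.choose_pos k.2.le
      positivity
  refine ⟨?_, h0, h1⟩
  rw [← Matrix.isUnit_submatrix_equiv (Fin.revPerm) (Equiv.refl (Fin σ)),
    Matrix.isUnit_iff_isUnit_det, Matrix.det_of_lowerTriangular, isUnit_iff_ne_zero,
    Finset.prod_ne_zero_iff]
  · intro i _
    have := h1 (Fin.rev i) i (by rw [Fin.val_rev]; omega)
    simp only [Matrix.submatrix_apply, Fin.revPerm_apply, Equiv.refl_apply]
    rw [this.1]
    exact this.2
  · intro i k hik
    have hik' : (i : ℕ) < k := hik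
    simp only [Matrix.submatrix_apply, Fin.revPerm_apply, Equiv.refl_apply]
    exact h0 _ _ (by rw [Fin.val_rev]; omega)
end

section
/- Let w be a word of length m and let p, i be integers with 2^i < p ≤ 2^{i+1} and 2p ≤ m. If w[m−2^i+1..m] = w[m−p−2^i+1..m−p] and w[m−p+1..m−p+2^i] = w[m−2p+1..m−2p+2^i], then w[j] = w[j−p] for all j with m−p+1 ≤ j ≤ m; that is, w ends with the square w[m−2p+1..m−p]·w[m−p+1..m] of period p. -/
/-- (Correctness of the online square detection step.) Let `w` be a word of
length `m` and `p, i` integers with `2^i < p ≤ 2^{i+1}` and `2p ≤ m`. If the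
length-`2^i` suffix of `w` equals the length-`2^i` block ending at position
`m − p` (1-indexed: `w[m−2^i+1..m] = w[m−p−2^i+1..m−p]`) and
`w[m−p+1..m−p+2^i] = w[m−2p+1..m−2p+2^i]`, then `w[j] = w[j−p]` for all
`m−p+1 ≤ j ≤ m` (0-indexed below: `w[j]? = w[j−p]?` for `m−p ≤ j < m`); that
is, `w` ends with a square of period `p`. -/
theorem online_square_detection {α : Type*} (w : List α) (m p i : ℕ)
    (hm : w.length = m) (hp1 : 2 ^ i < p) (hp2 : p ≤ 2 ^ (i + 1)) (h2p : 2 * p ≤ m)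
    (h1 : w.drop (m - 2 ^ i) = (w.drop (m - p - 2 ^ i)).take (2 ^ i))
    (h2 : (w.drop (m - p)).take (2 ^ i) = (w.drop (m - 2 * p)).take (2 ^ i)) :
    (∀ j : ℕ, m - p ≤ j → j < m → w[j]? = w[j - p]?) ∧
      ∃ v : List α, v.length = p ∧ (v ++ v) <:+ w := by
  rw [pow_succ] at hp2
  generalize 2 ^ i = q at *
  have key : ∀ j : ℕ, m - p ≤ j → j < m → w[j]? = w[j - p]? := by
    intro j hj1 hj2
    by_cases hq : m - q ≤ j
    · have h := congrArg (fun l => l[j - (m - q)]?) h1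
      simp only [List.getElem?_take, List.getElem?_drop] at h
      rw [if_pos (by omega)] at h
      rw [show m - q + (j - (m - q)) = j by omega,
        show m - p - q + (j - (m - q)) = j - p by omega] at h
      exact h
    · have h := congrArg (fun l => l[j - (m - p)]?) h2
      simp only [List.getElem?_take, List.getElem?_drop] at h
      rw [if_pos (by omega), if_pos (by omega)] at h
      rw [show m - p + (j - (m - p)) = j by omega,
        show m - 2 * p + (j - (m - p)) = j - p by omega] at h
      exact h
  refine ⟨key, w.drop (m - p), by rw [List.length_drop]; omega, ?_⟩
  have e : w.drop (m - p) ++ w.drop (m - p) = w.drop (m - 2 * p) := by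
    apply List.ext_getElem?
    intro n
    rw [List.getElem?_append, List.length_drop]
    simp only [List.getElem?_drop]
    split_ifs with hn
    · rw [key _ (by omega) (by omega)]
      congr 1
      omega
    · congr 1
      omega
  rw [e]
  exact List.drop_suffix _ _
end

section
/- Let w be a word over an alphabet Σ, written as w = u·z with z a suffix of w, and suppose there is a letter a ∈ Σ that occurs strictly more times in z than in u. Then w has no suffix that is an Abelian square vv′ with |v| = |v′| ≥ |z|; that is, for every factorization w = x·v·v′ with |v| = |v′| ≥ |z|, the Parikh vectors of v and v′ differ. -/
/-- (Early termination in online Abelian-square detection.) Let `w = u · z` and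
suppose some letter `a` occurs strictly more times in the suffix `z` than in
`u`. Then `w` has no suffix that is an Abelian square `v·v′` with
`|v| = |v′| ≥ |z|`: for every factorization `w = x · v · v′` with
`|v| = |v′| ≥ |z|`, the Parikh vectors of `v` and `v′` differ, i.e. some letter
occurs a different number of times in `v` and in `v′`. -/
theorem no_long_abelian_square_suffix {α : Type*} [DecidableEq α]
    (u z : List α) (a : α) (ha : u.count a < z.count a) :
    ∀ x v v' : List α, u ++ z = x ++ v ++ v' → v.length = v'.length →
      z.length ≤ v.length → ∃ b : α, v.count b ≠ v'.count b := by
  intro x v v' h hl hz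
  refine ⟨a, fun hc => ?_⟩
  have hs : z <:+ v' :=
    List.suffix_of_suffix_length_le (l₃ := u ++ z) (List.suffix_append u z)
      (h ▸ List.suffix_append (x ++ v) v') (by omega)
  obtain ⟨t, rfl⟩ := hs
  have h2 := congrArg (List.count a) h
  simp only [List.count_append] at h2 hc
  omega
end

section
/- For an infinite factorial language L over a finite alphabet Σ, the Markov entropy does not exceed the general entropy: μ(L) ≤ H(L) = log₂ gr(L), where gr(L) = lim_{n→∞} (C_L(n))^{1/n}. -/
open Filter

/-- A language is factorial if it contains every factor (contiguous subword,
i.e. infix) of each of its elements. -/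
def IsFactorial {α : Type*} (L : Set (List α)) : Prop :=
  ∀ v ∈ L, ∀ u : List α, u <:+: v → u ∈ L

/-- Combinatorial complexity: the number of words of length `n` in `L`. -/
noncomputable def wordCount {α : Type*} (L : Set (List α)) (n : ℕ) : ℕ :=
  {w : List α | w ∈ L ∧ w.length = n}.ncard

/-- `chn L n u` is the number of letters `a` such that `u ++ [a]` is a prefix of
some length-`n` word of `L`. -/
noncomputable def chn {α : Type*} (L : Set (List α)) (n : ℕ) (u : List α) : ℕ :=
  {a : α | ∃ w ∈ L, w.length = n ∧ (u ++ [a]) <+: w}.ncard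

/-- `P_[n](w) = ∏_{i=0}^{n-1} 1 / ch_[n](w[1..i])`. -/
noncomputable def Pn {α : Type*} (L : Set (List α)) (n : ℕ) (w : List α) : ℝ :=
  ∏ i ∈ Finset.range n, (1 : ℝ) / (chn L n (w.take i) : ℝ)

/-- `H(η_n) = −Σ_{w ∈ L, |w|=n} P_[n](w)·log₂ P_[n](w)`. -/
noncomputable def Hη {α : Type*} (L : Set (List α)) (n : ℕ) : ℝ :=
  -∑ᶠ w ∈ {w : List α | w ∈ L ∧ w.length = n}, Pn L n w * Real.logb 2 (Pn L n w)

theorem aux_W_finite {α : Type*} [Fintype α] (L : Set (List α)) (n : ℕ) :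
    {w : List α | w ∈ L ∧ w.length = n}.Finite :=
  (List.finite_length_eq α n).subset (fun _ hw => hw.2)

theorem aux_W_nonempty {α : Type*} [Fintype α] (L : Set (List α)) (hL : IsFactorial L)
    (hInf : L.Infinite) (n : ℕ) : {w : List α | w ∈ L ∧ w.length = n}.Nonempty := by
  by_contra h
  apply hInf
  apply (List.finite_length_lt α n).subset
  intro w hw
  by_contra hn
  have hn : n ≤ w.length := by simpa using hn
  exact h ⟨w.take n, hL w hw _ (List.take_prefix n w).isInfix, by simp [hn]⟩

open Classical in
theorem aux_sum {α : Type*} [Fintype α] (L : Set (List α)) (n : ℕ) (W : Finset (List α))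
    (hW : ∀ w, w ∈ W ↔ w ∈ L ∧ w.length = n) (hne : W.Nonempty) (k : ℕ) (hk : k ≤ n) :
    ∑ u ∈ W.image (List.take k), ∏ i ∈ Finset.range k, (1 : ℝ) / (chn L n (u.take i) : ℝ) = 1 := by
  induction k with
  | zero =>
    have : W.image (List.take 0) = {[]} := by
      ext u
      simp; exact fun _ => hne
    rw [this]; simp
  | succ k ih =>
    have ih := ih (by omega)
    refine Eq.trans ?_ ih
    rw [← Finset.sum_fiberwise_of_maps_to (s := W.image (List.take (k+1)))
      (t := W.image (List.take k)) (g := List.take k)]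
    · apply Finset.sum_congr rfl
      intro u hu
      obtain ⟨w, hw, rfl⟩ := Finset.mem_image.1 hu
      obtain ⟨hwL, hwn⟩ := (hW w).1 hw
      set u := w.take k with hu'
      have hul : u.length = k := by simp [hu']; omega
      have hcard : ((W.image (List.take (k+1))).filter (fun v => v.take k = u)).card
          = chn L n u := by
        unfold chn
        rw [← Set.ncard_coe_finset,
          ← Set.ncard_image_of_injective _ (f := fun a : α => u ++ [a]) (by
            intro a b h; simpa using h)]
        congr 1
        ext v
        simp only [Finset.coe_filter, Finset.mem_image, Set.mem_ofPred_eq, Set.mem_image]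
        constructor
        · rintro ⟨⟨x, hx, rfl⟩, hv⟩
          obtain ⟨hxL, hxn⟩ := (hW x).1 hx
          have hkx : k < x.length := by omega
          have e : x.take (k+1) = u ++ [x[k]] := by
            rw [← hv, List.take_take, List.take_add_one]
            simp [hkx]
          exact ⟨x[k], ⟨x, hxL, hxn, e ▸ List.take_prefix _ _⟩, e.symm⟩
        · rintro ⟨a, ⟨x, hxL, hxn, hp⟩, rfl⟩
          refine ⟨⟨x, (hW x).2 ⟨hxL, hxn⟩, ?_⟩, ?_⟩
          · rw [List.prefix_iff_eq_take] at hp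
            simpa [hul] using hp.symm
          · rw [← hul]; simp
      have hpos : chn L n u ≠ 0 := by
        rw [← hcard, Finset.card_ne_zero]
        refine ⟨w.take (k+1), ?_⟩
        simp only [Finset.mem_filter, Finset.mem_image]
        exact ⟨⟨w, hw, rfl⟩, by rw [List.take_take, hu']; simp⟩
      have hpos' : (chn L n u : ℝ) ≠ 0 := by exact_mod_cast hpos
      rw [Finset.sum_congr rfl (g := fun _ =>
        (∏ i ∈ Finset.range k, (1 : ℝ) / (chn L n (u.take i) : ℝ)) * (1 / (chn L n u : ℝ)))]
      · rw [Finset.sum_const, hcard, nsmul_eq_mul]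
        field_simp
      · intro v hv
        have hv2 := (Finset.mem_filter.1 hv).2
        rw [Finset.prod_range_succ, hv2]
        congr 1
        apply Finset.prod_congr rfl
        intro i hi
        have := Finset.mem_range.1 hi
        rw [← hv2, List.take_take, min_eq_left this.le]
    · intro v hv
      obtain ⟨w, hw, rfl⟩ := Finset.mem_image.1 hv
      exact Finset.mem_image.2 ⟨w, hw, by rw [List.take_take]; simp⟩

theorem aux_gibbs (p N : ℝ) (hp : 0 ≤ p) (hN : 0 < N) :
    -(p * Real.log p) ≤ p * Real.log N + (1 / N - p) := by
  rcases hp.eq_or_lt with rfl | hp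
  · simp; exact hN.le
  · have h := Real.log_le_sub_one_of_pos (x := 1 / (p * N)) (by positivity)
    rw [one_div, Real.log_inv, Real.log_mul hp.ne' hN.ne'] at h
    have h2 := mul_le_mul_of_nonneg_left h hp.le
    have h3 : p * ((p * N)⁻¹ - 1) = 1 / N - p := by field_simp
    rw [h3] at h2
    linarith

theorem aux_H {α : Type*} [Fintype α] (L : Set (List α)) (hL : IsFactorial L)
    (hInf : L.Infinite) (n : ℕ) : Hη L n ≤ Real.logb 2 (wordCount L n) := by
  classical
  have hf := aux_W_finite L n
  have hW : ∀ w, w ∈ hf.toFinset ↔ w ∈ L ∧ w.length = n := by simp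
  have hne : hf.toFinset.Nonempty := by
    simpa using aux_W_nonempty L hL hInf n
  have hs := aux_sum L n hf.toFinset hW hne n le_rfl
  have him : hf.toFinset.image (List.take n) = hf.toFinset := by
    conv_rhs => rw [← Finset.image_id (s := hf.toFinset)]
    apply Finset.image_congr
    intro w hw
    have := ((hW w).1 hw).2
    simp [← this]
  rw [him] at hs
  change ∑ w ∈ hf.toFinset, Pn L n w = 1 at hs
  have hc : wordCount L n = hf.toFinset.card := Set.ncard_eq_toFinset_card _ hf
  have hNpos : 0 < (wordCount L n : ℝ) := by
    rw [hc]; exact_mod_cast hne.card_pos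
  unfold Hη
  rw [finsum_mem_eq_finite_toFinset_sum _ hf]
  simp only [Real.logb]
  have hl : 0 < Real.log 2 := Real.log_pos (by norm_num)
  rw [le_div_iff₀ hl, ← Finset.sum_neg_distrib, Finset.sum_mul]
  calc _ = ∑ w ∈ hf.toFinset, -(Pn L n w * Real.log (Pn L n w)) := by
        apply Finset.sum_congr rfl
        intro w _
        field_simp
    _ ≤ ∑ w ∈ hf.toFinset, (Pn L n w * Real.log (wordCount L n)
          + (1 / (wordCount L n : ℝ) - Pn L n w)) := by
        apply Finset.sum_le_sum
        intro w _
        apply aux_gibbs _ _ _ hNpos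
        exact Finset.prod_nonneg (fun i _ => by positivity)
    _ = Real.log (wordCount L n) := by
        rw [Finset.sum_add_distrib, ← Finset.sum_mul, Finset.sum_sub_distrib, hs,
          Finset.sum_const, ← hc, nsmul_eq_mul]
        field_simp
        ring

/-- For an infinite factorial language `L` over a finite alphabet, the Markov
entropy `μ(L) = lim_{n→∞} H(η_n)/n` does not exceed the general entropy
`H(L) = log₂ gr(L)`, where `gr(L) = lim_{n→∞} C_L(n)^{1/n}`. -/
theorem markovEntropy_le_log_growthRate {α : Type*} [Fintype α]
    (L : Set (List α)) (hL : IsFactorial L) (hInf : L.Infinite)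
    (μ gr : ℝ)
    (hμ : Tendsto (fun n : ℕ => Hη L n / (n : ℝ)) atTop (nhds μ))
    (hgr : Tendsto (fun n : ℕ => (wordCount L n : ℝ) ^ (1 / (n : ℝ))) atTop (nhds gr)) :
    μ ≤ Real.logb 2 gr := by
  have hN : ∀ n, (1 : ℝ) ≤ wordCount L n := by
    intro n
    have := (Set.ncard_pos (aux_W_finite L n)).2 (aux_W_nonempty L hL hInf n)
    exact_mod_cast this
  have hgr1 : 1 ≤ gr := ge_of_tendsto' hgr (fun n => Real.one_le_rpow (hN n) (by positivity))
  have hlim : Tendsto (fun n : ℕ => Real.logb 2 ((wordCount L n : ℝ) ^ (1 / (n : ℝ))))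
      atTop (nhds (Real.logb 2 gr)) := by
    simp only [Real.logb]
    exact (hgr.log (by linarith)).div_const _
  refine le_of_tendsto_of_tendsto' hμ hlim (fun n => ?_)
  rw [Real.logb_rpow_eq_mul_logb_of_pos (by linarith [hN n]), one_div, inv_mul_eq_div]
  exact div_le_div_of_nonneg_right (aux_H L hL hInf n) (by positivity)
end
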